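/- arXiv:2206.10389 — 7 statements merged into one kernel-verified Lean document; each statement's English description precedes it below -/
import Mathlib

section
/- Let φ be an exact 2CNF Boolean formula in a clean shape with distinct variables x₁,…,xₙ and clauses c₁,…,c_m, in which every variable occurs at most 3 times and no literal is removable. If φ is satisfiable, then the graph G_φ has a 2-checkered vertex cover. -/
/-- Vertices of the graph `G_φ`: `Sum.inl (i, true)` is the literal vertex `u_i^{(1)}`
(for the positive literal `x_i`), `Sum.inl (i, false)` is `u_i^{(2)}` (for `¬x_i`),
and `Sum.inr (j, l)` is the clause-position vertex `c_j[l]` (positions indexed by `Bool`). -/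
abbrev CVCVertex (n m : ℕ) := (Fin n × Bool) ⊕ (Fin m × Bool)

/-- The graph `G_φ` built from an exact 2CNF formula `φ` whose clause `j` has the two
literals `ltr j false` and `ltr j true`, a literal being a pair (variable, polarity). -/
def Gphi {n m : ℕ} (ltr : Fin m → Bool → Fin n × Bool) : SimpleGraph (CVCVertex n m) :=
  SimpleGraph.fromRel (fun a b =>
    match a, b with
    | Sum.inl (i, _), Sum.inl (i', _) => i = i'
    | Sum.inr (j, _), Sum.inr (j', _) => j = j'
    | Sum.inl (i, pol), Sum.inr (j, l) => ltr j l = (i, pol)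
    | Sum.inr (j, l), Sum.inl (i, pol) => ltr j l = (i, pol))

/-
An edge of `G_φ` at a literal vertex joins a literal to its negation or to one of its occurrences,
so the set `C_σ` contains exactly one of its endpoints. The clause edges are covered by `C_σ`
precisely because `σ` satisfies every clause. If both ends of a clause edge lie in `C_σ`, the edge
is a grip: a clause position is adjacent only to its partner and to its literal.
-/

theorem ne_and_fst_eq_iff_eq_mk_not {α : Type*} {x y : α × Bool} :
    x ≠ y ∧ x.1 = y.1 ↔ y = (x.1, !x.2) := by
  rcases x with ⟨i, b⟩
  rcases y with ⟨j, c⟩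
  cases b <;> cases c <;> simp [eq_comm]

namespace Gphi

variable {n m : ℕ} {ltr : Fin m → Bool → Fin n × Bool}

theorem adj_inl_inl {x y : Fin n × Bool} :
    (Gphi ltr).Adj (Sum.inl x) (Sum.inl y) ↔ y = (x.1, !x.2) := by
  simp [Gphi, ← ne_and_fst_eq_iff_eq_mk_not, eq_comm (a := y.1)]

theorem adj_inr_inr {p q : Fin m × Bool} :
    (Gphi ltr).Adj (Sum.inr p) (Sum.inr q) ↔ q = (p.1, !p.2) := by
  simp [Gphi, ← ne_and_fst_eq_iff_eq_mk_not, eq_comm (a := q.1)]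

theorem adj_inl_inr {x : Fin n × Bool} {p : Fin m × Bool} :
    (Gphi ltr).Adj (Sum.inl x) (Sum.inr p) ↔ x = ltr p.1 p.2 := by
  simp [Gphi, eq_comm]

theorem neighborSet_inr (p : Fin m × Bool) :
    (Gphi ltr).neighborSet (Sum.inr p) = {Sum.inr (p.1, !p.2), Sum.inl (ltr p.1 p.2)} := by
  ext (x | q)
  · simp [SimpleGraph.adj_comm _ (Sum.inr p), adj_inl_inr]
  · simp [adj_inr_inr]

theorem ncard_neighborSet_inr (p : Fin m × Bool) :
    ((Gphi ltr).neighborSet (Sum.inr p)).ncard = 2 := by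
  rw [neighborSet_inr, Set.ncard_pair Sum.inr_ne_inl]

end Gphi

/-- The vertex set `C_σ` of `G_φ`: the literal vertices whose literal is false under `σ`, and the
clause-position vertices whose literal is true under `σ`. It is the candidate for the 2-checkered
vertex cover. -/
def assignmentCover {n m : ℕ} (ltr : Fin m → Bool → Fin n × Bool) (σ : Fin n → Bool) :
    Set (CVCVertex n m) :=
  {a | Sum.elim (fun x => σ x.1 ≠ x.2) (fun p => σ (ltr p.1 p.2).1 = (ltr p.1 p.2).2) a}

section assignmentCover

variable {n m : ℕ} {ltr : Fin m → Bool → Fin n × Bool} {σ : Fin n → Bool}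

theorem inl_mem_assignmentCover {x : Fin n × Bool} :
    Sum.inl x ∈ assignmentCover ltr σ ↔ σ x.1 ≠ x.2 :=
  Iff.rfl

theorem inr_mem_assignmentCover {p : Fin m × Bool} :
    Sum.inr p ∈ assignmentCover ltr σ ↔ σ (ltr p.1 p.2).1 = (ltr p.1 p.2).2 :=
  Iff.rfl

theorem inl_mem_assignmentCover_iff_notMem_of_adj {x : Fin n × Bool} {b : CVCVertex n m}
    (hadj : (Gphi ltr).Adj (Sum.inl x) b) :
    Sum.inl x ∈ assignmentCover ltr σ ↔ b ∉ assignmentCover ltr σ := by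
  rcases b with y | p
  · obtain rfl := Gphi.adj_inl_inl.mp hadj
    simp [inl_mem_assignmentCover]
  · obtain rfl := Gphi.adj_inl_inr.mp hadj
    rw [inl_mem_assignmentCover, inr_mem_assignmentCover]

theorem isVertexCover_assignmentCover (hσ : ∀ j, ∃ l, σ (ltr j l).1 = (ltr j l).2) :
    (Gphi ltr).IsVertexCover (assignmentCover ltr σ) := by
  rintro (x | p) b hadj
  · have := inl_mem_assignmentCover_iff_notMem_of_adj (σ := σ) hadj
    tauto
  rcases b with y | q
  · have := inl_mem_assignmentCover_iff_notMem_of_adj (σ := σ) hadj.symm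
    tauto
  · obtain rfl := Gphi.adj_inr_inr.mp hadj
    obtain ⟨l, hl⟩ := hσ p.1
    rcases Bool.eq_or_eq_not l p.2 with rfl | rfl
    · exact Or.inl hl
    · exact Or.inr hl

theorem ncard_neighborSet_of_adj_of_mem_assignmentCover {a b : CVCVertex n m}
    (hadj : (Gphi ltr).Adj a b) (ha : a ∈ assignmentCover ltr σ)
    (hb : b ∈ assignmentCover ltr σ) : ((Gphi ltr).neighborSet a).ncard = 2 := by
  rcases a with x | p
  · exact absurd hb ((inl_mem_assignmentCover_iff_notMem_of_adj hadj).mp ha)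
  · exact Gphi.ncard_neighborSet_inr p

end assignmentCover

theorem stmt_6_general {n m : ℕ} (ltr : Fin m → Bool → Fin n × Bool)
    (σ : Fin n → Bool) (hσ : ∀ j, ∃ p, σ (ltr j p).1 = (ltr j p).2) :
    ∃ S : Set (CVCVertex n m),
      (∀ a b, (Gphi ltr).Adj a b → a ∈ S ∨ b ∈ S) ∧
      (∀ a b, (Gphi ltr).Adj a b → a ∈ S → b ∈ S →
        ((Gphi ltr).neighborSet a).ncard ≤ 2 ∧ ((Gphi ltr).neighborSet b).ncard ≤ 2) :=
  ⟨assignmentCover ltr σ, fun _ _ hadj => isVertexCover_assignmentCover hσ hadj,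
    fun _ _ hadj ha hb =>
      ⟨(ncard_neighborSet_of_adj_of_mem_assignmentCover hadj ha hb).le,
        (ncard_neighborSet_of_adj_of_mem_assignmentCover hadj.symm hb ha).le⟩⟩

theorem stmt_6 {n m : ℕ} (ltr : Fin m → Bool → Fin n × Bool)
    (hclean : ∀ j, (ltr j false).1 ≠ (ltr j true).1)
    (hocc : ∀ i : Fin n,
      (Finset.univ.filter (fun p : Fin m × Bool => (ltr p.1 p.2).1 = i)).card ≤ 3)
    (hnorem : ∀ (i : Fin n) (b : Bool),
      (∃ j l, ltr j l = (i, b)) → ∃ j l, ltr j l = (i, !b))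
    (σ : Fin n → Bool) (hσ : ∀ j, ∃ p, σ (ltr j p).1 = (ltr j p).2) :
    ∃ S : Set (CVCVertex n m),
      (∀ a b, (Gphi ltr).Adj a b → a ∈ S ∨ b ∈ S) ∧
      (∀ a b, (Gphi ltr).Adj a b → a ∈ S → b ∈ S →
        ((Gphi ltr).neighborSet a).ncard ≤ 2 ∧ ((Gphi ltr).neighborSet b).ncard ≤ 2) := by
  exact stmt_6_general ltr σ hσ
end

section
/- Let X = {u₁,…,uₙ} be a finite set, let R ⊆ X, and let C₁,…,C_m be subsets of X such that every element of X belongs to exactly two of the sets C_j (counting indices j). Define the n × m matrix A by A_{ij} = 1 if u_i ∈ C_j and A_{ij} = 0 otherwise, and define b, b' ∈ ℚ^n by b_i = b'_i = 1 if u_i ∉ R and b_i = 0, b'_i = 1 if u_i ∈ R. Then for every set of indices D ⊆ [m], the indexed family (C_j)_{j ∈ D} is an exact cover for X exempt from R if and only if the indicator vector x_D ∈ {0,1}^m (with (x_D)_j = 1 iff j ∈ D) satisfies b ≤ A·x_D ≤ b' componentwise. Consequently, there exists D ⊆ [m] such that (C_j)_{j ∈ D} is an exact cover for X exempt from R if and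 only if there exists x ∈ {0,1}^m with b ≤ Ax ≤ b' componentwise. -/
/-! For a row `a`, the entry `(A x_D)_a` is the number of indices `j ∈ D` with `a ∈ C j`. The upper
bound `1` says that this number is at most one; the lower bound is `1` outside `R`, where it forces
equality, and `0` on `R`, where it is vacuous. The `{0,1}`-vectors are exactly the vectors `x_D`. -/

open Finset Matrix

section ExactCover

variable {α ι : Type*}

/-- The family `(C j)_{j ∈ D}` is an exact cover of the type `α`, which plays the role of the ground
set, exempt from `R`: points outside `R` are covered exactly once, points of `R` at most once.
Multiplicities are counted by index, so equal sets with different indices are distinct members. -/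
def IsExactCoverExempt (C : ι → Set α) (R : Set α) (D : Finset ι) : Prop :=
  (∀ a, a ∉ R → ∃! j, j ∈ D ∧ a ∈ C j) ∧
    ∀ a ∈ R, ∀ j₁ ∈ D, ∀ j₂ ∈ D, a ∈ C j₁ → a ∈ C j₂ → j₁ = j₂

theorem existsUnique_mem_and_iff_card_filter_eq_one (s : Finset ι) (p : ι → Prop)
    [DecidablePred p] : (∃! j, j ∈ s ∧ p j) ↔ #{j ∈ s | p j} = 1 := by
  simp only [card_eq_one_iff_existsUnique, mem_filter]

theorem forall_mem_eq_iff_card_filter_le_one (s : Finset ι) (p : ι → Prop) [DecidablePred p] :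
    (∀ j₁ ∈ s, ∀ j₂ ∈ s, p j₁ → p j₂ → j₁ = j₂) ↔ #{j ∈ s | p j} ≤ 1 := by
  simp only [card_le_one, mem_filter, and_imp]
  exact forall₂_congr fun _ _ ↦ ⟨fun h hp₁ j₂ hj₂ hp₂ ↦ h j₂ hj₂ hp₁ hp₂,
    fun h j₂ hj₂ hp₁ hp₂ ↦ h hp₁ j₂ hj₂ hp₂⟩

theorem isExactCoverExempt_iff_card (C : ι → Set α) [∀ a j, Decidable (a ∈ C j)] (R : Set α)
    [DecidablePred (· ∈ R)] (D : Finset ι) :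
    IsExactCoverExempt C R D ↔
      ∀ a, (if a ∈ R then 0 else 1) ≤ #{j ∈ D | a ∈ C j} ∧ #{j ∈ D | a ∈ C j} ≤ 1 := by
  simp only [IsExactCoverExempt, existsUnique_mem_and_iff_card_filter_eq_one,
    forall_mem_eq_iff_card_filter_le_one, ← forall_and]
  refine forall_congr' fun a ↦ ?_
  split_ifs with ha
  · simp [ha]
  · simp [ha, le_antisymm_iff, and_comm]

end ExactCover

section ZeroOneVec

variable {ι : Type*} (K : Type*) [Zero K] [One K]

/-- The characteristic vector `x_D ∈ {0,1}^ι` of a finite set `D` of indices. -/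
def zeroOneVec [DecidableEq ι] (D : Finset ι) : ι → K :=
  fun j ↦ if j ∈ D then 1 else 0

variable {K}

theorem forall_eq_zero_or_one_iff_exists_zeroOneVec [Finite ι] [DecidableEq ι] {x : ι → K} :
    (∀ j, x j = 0 ∨ x j = 1) ↔ ∃ D : Finset ι, zeroOneVec K D = x := by
  constructor
  · intro hx
    classical
    have := Fintype.ofFinite ι
    refine ⟨univ.filter (x · = 1), funext fun j ↦ ?_⟩
    by_cases hj : x j = 1
    · simp [zeroOneVec, hj]
    · simpa [zeroOneVec, hj] using ((hx j).resolve_right hj).symm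
  · rintro ⟨D, rfl⟩ j
    exact (ite_eq_or_eq _ _ _).symm

end ZeroOneVec

section LinearSystem

variable {α ι K : Type*} [Fintype ι] [DecidableEq ι]

theorem mulVec_zeroOneVec_eq_card [NonAssocSemiring K] (C : ι → Set α)
    [∀ a j, Decidable (a ∈ C j)] {A : Matrix α ι K} (hA : ∀ a j, A a j = if a ∈ C j then 1 else 0)
    (D : Finset ι) (a : α) : (A *ᵥ zeroOneVec K D) a = #{j ∈ D | a ∈ C j} := by
  simp [mulVec, dotProduct, zeroOneVec, hA, sum_ite_mem]

variable [Semiring K] [PartialOrder K] [IsOrderedRing K] [CharZero K]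

theorem isExactCoverExempt_iff_le_mulVec_le (C : ι → Set α)
    [∀ a j, Decidable (a ∈ C j)] (R : Set α) [DecidablePred (· ∈ R)] {A : Matrix α ι K}
    (hA : ∀ a j, A a j = if a ∈ C j then 1 else 0) {b b' : α → K}
    (hb : ∀ a, b a = if a ∈ R then 0 else 1) (hb' : ∀ a, b' a = 1) (D : Finset ι) :
    IsExactCoverExempt C R D ↔
      ∀ a, b a ≤ (A *ᵥ zeroOneVec K D) a ∧ (A *ᵥ zeroOneVec K D) a ≤ b' a := by
  simp only [isExactCoverExempt_iff_card, mulVec_zeroOneVec_eq_card C hA, hb, hb']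
  norm_cast

theorem stmt_9_general (C : ι → Set α)
    [∀ a j, Decidable (a ∈ C j)] (R : Set α) [DecidablePred (· ∈ R)] (A : Matrix α ι K)
    (hA : ∀ a j, A a j = if a ∈ C j then 1 else 0) (b b' : α → K)
    (hb : ∀ a, b a = if a ∈ R then 0 else 1) (hb' : ∀ a, b' a = 1) :
    (∀ D : Finset ι, IsExactCoverExempt C R D ↔
      ∀ a, b a ≤ (A *ᵥ zeroOneVec K D) a ∧ (A *ᵥ zeroOneVec K D) a ≤ b' a) ∧
    ((∃ D : Finset ι, IsExactCoverExempt C R D) ↔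
      ∃ x : ι → K, (∀ j, x j = 0 ∨ x j = 1) ∧ ∀ a, b a ≤ (A *ᵥ x) a ∧ (A *ᵥ x) a ≤ b' a) := by
  have cover_iff := isExactCoverExempt_iff_le_mulVec_le C R hA hb hb'
  refine ⟨cover_iff, ?_⟩
  simp only [cover_iff, forall_eq_zero_or_one_iff_exists_zeroOneVec, exists_exists_eq_and]

end LinearSystem

theorem stmt_9 {n m : ℕ} (C : Fin m → Finset (Fin n)) (R : Finset (Fin n))
    (hover : ∀ i : Fin n, (Finset.univ.filter (fun j => i ∈ C j)).card = 2)
    (A : Matrix (Fin n) (Fin m) ℚ)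
    (hA : ∀ i j, A i j = if i ∈ C j then 1 else 0)
    (b b' : Fin n → ℚ)
    (hb : ∀ i, b i = if i ∈ R then 0 else 1)
    (hb' : ∀ i, b' i = 1) :
    (∀ D : Finset (Fin m),
      ((∀ i : Fin n, i ∉ R → ∃! j, j ∈ D ∧ i ∈ C j) ∧
       (∀ i ∈ R, ∀ j₁ ∈ D, ∀ j₂ ∈ D, i ∈ C j₁ → i ∈ C j₂ → j₁ = j₂)) ↔
      (∀ i, b i ≤ A.mulVec (fun j => if j ∈ D then 1 else 0) i ∧
        A.mulVec (fun j => if j ∈ D then 1 else 0) i ≤ b' i)) ∧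
    ((∃ D : Finset (Fin m),
      (∀ i : Fin n, i ∉ R → ∃! j, j ∈ D ∧ i ∈ C j) ∧
      (∀ i ∈ R, ∀ j₁ ∈ D, ∀ j₂ ∈ D, i ∈ C j₁ → i ∈ C j₂ → j₁ = j₂)) ↔
     (∃ x : Fin m → ℚ, (∀ j, x j = 0 ∨ x j = 1) ∧
       ∀ i, b i ≤ A.mulVec x i ∧ A.mulVec x i ≤ b' i)) :=
  stmt_9_general (fun j ↦ (C j : Set (Fin n))) (R : Set (Fin n)) A hA b b' hb hb'
end

section
/- Let φ, X, and D be as in the construction of the reduction from 2SAT₃ to 3XCE₂. Then every element of X belongs to exactly two members of the collection D. -/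
/-- The abstract elements used in the reduction from 2SAT₃ to 3XCE₂:
`lit i b j` is the element `z[j]` for the literal `z` with variable `x_i` and polarity `b`
occurring in clause `C_j`; `s j` is the element `s_j`; `t i false` is `t_i[1]` and
`t i true` is `t_i[2]`. -/
inductive XCElem (n m : ℕ) where
  | lit : Fin n → Bool → Fin m → XCElem n m
  | s : Fin m → XCElem n m
  | t : Fin n → Bool → XCElem n m

/-- The three classes of variables: `plus` is `V⁺`, `minus` is `V⁻`, `star` is `V*`. -/
inductive XCClass where
  | plus | minus | star

/-- The literal `(i, b)` occurs in clause `j` of the formula whose clause `j` consists of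
the two literals `ltr j false` and `ltr j true`. -/
def OccursIn {n m : ℕ} (ltr : Fin m → Bool → Fin n × Bool)
    (i : Fin n) (b : Bool) (j : Fin m) : Prop :=
  ∃ p, ltr j p = (i, b)

/-- The universe `X = X₁ ∪ X₂ ∪ X₃` of the construction. -/
def coverX {n m : ℕ} (ltr : Fin m → Bool → Fin n × Bool) (cls : Fin n → XCClass) :
    Set (XCElem n m) :=
  {e | ∃ i b j, OccursIn ltr i b j ∧ e = XCElem.lit i b j} ∪
  {e | ∃ j, e = XCElem.s j} ∪
  {e | ∃ i, e = XCElem.t i false} ∪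
  {e | ∃ i, cls i ≠ XCClass.star ∧ e = XCElem.t i true}

/-- The exemption set `R = X₁`. -/
def coverR {n m : ℕ} (ltr : Fin m → Bool → Fin n × Bool) : Set (XCElem n m) :=
  {e | ∃ i b j, OccursIn ltr i b j ∧ e = XCElem.lit i b j}

/-- The collection `D` of subsets of `X` of the construction. -/
def coverD {n m : ℕ} (ltr : Fin m → Bool → Fin n × Bool) (cls : Fin n → XCClass)
    (j₁ j₂ j₃ : Fin n → Fin m) : Set (Set (XCElem n m)) :=
  {S | ∃ i b j, OccursIn ltr i b j ∧ S = {XCElem.lit i b j, XCElem.s j}} ∪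
  {S | ∃ i, cls i = XCClass.plus ∧
      (S = {XCElem.lit i true (j₁ i), XCElem.t i false} ∨
       S = {XCElem.lit i true (j₂ i), XCElem.t i true} ∨
       S = {XCElem.lit i false (j₃ i), XCElem.t i false, XCElem.t i true})} ∪
  {S | ∃ i, cls i = XCClass.minus ∧
      (S = {XCElem.lit i false (j₁ i), XCElem.t i false} ∨
       S = {XCElem.lit i false (j₂ i), XCElem.t i true} ∨
       S = {XCElem.lit i true (j₃ i), XCElem.t i false, XCElem.t i true})} ∪
  {S | ∃ i, cls i = XCClass.star ∧
      (S = {XCElem.lit i true (j₁ i), XCElem.t i false} ∨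
       S = {XCElem.lit i false (j₂ i), XCElem.t i false})}

/-!
Every set of `D` is either a clause set `{z[j], s_j}` or belongs to the gadget of a single variable.
Hence `s_j` lies only in the clause sets of the two literals of `C_j`, and `t_i[k]` only in sets of
the gadget of `x_i`, two of which contain it. Finally, `z[j]` lies in its own clause set and in
exactly one set of the gadget of its variable, because the gadget has one set per occurrence.
-/

section Gadgets

variable {n m : ℕ}

/-- The set `{z[j], s_j}` of an occurrence of the literal `z = (i, b)` in the clause `C_j`. -/
def clauseSet (i : Fin n) (b : Bool) (j : Fin m) : Set (XCElem n m) :=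
  {XCElem.lit i b j, XCElem.s j}

/-- The three sets of `D` attached to a variable `x_i ∈ V⁺ ∪ V⁻` whose literal of polarity `b`
occurs in the clauses `p` and `q` and whose literal of the opposite polarity occurs in `r`. -/
def tripleGadget (i : Fin n) (b : Bool) (p q r : Fin m) : Set (Set (XCElem n m)) :=
  {{XCElem.lit i b p, XCElem.t i false}, {XCElem.lit i b q, XCElem.t i true},
    {XCElem.lit i (!b) r, XCElem.t i false, XCElem.t i true}}

/-- The two sets of `D` attached to a variable `x_i ∈ V*` occurring positively in the clause `p`
and negatively in the clause `q`. -/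
def pairGadget (i : Fin n) (p q : Fin m) : Set (Set (XCElem n m)) :=
  {{XCElem.lit i true p, XCElem.t i false}, {XCElem.lit i false q, XCElem.t i false}}

/-- The sets of `D` attached to the variable `x_i`, according to its class. -/
def variableGadget (cls : Fin n → XCClass) (j₁ j₂ j₃ : Fin n → Fin m) (i : Fin n) :
    Set (Set (XCElem n m)) :=
  match cls i with
  | XCClass.plus => tripleGadget i true (j₁ i) (j₂ i) (j₃ i)
  | XCClass.minus => tripleGadget i false (j₁ i) (j₂ i) (j₃ i)
  | XCClass.star => pairGadget i (j₁ i) (j₂ i)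

theorem ncard_tripleGadget_t (i : Fin n) (b k : Bool) (p q r : Fin m) :
    {S | S ∈ tripleGadget i b p q r ∧ XCElem.t i k ∈ S}.ncard = 2 := by
  have hpair : {S | S ∈ tripleGadget i b p q r ∧ XCElem.t i k ∈ S} =
      {{XCElem.lit i b (bif k then q else p), XCElem.t i k},
        {XCElem.lit i (!b) r, XCElem.t i false, XCElem.t i true}} := by
    ext S
    constructor
    · rintro ⟨rfl | rfl | rfl, ht⟩ <;> cases k <;> simp_all
    · rintro (rfl | rfl) <;> cases k <;> simp [tripleGadget]
  rw [hpair, Set.ncard_pair]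
  exact ne_of_mem_of_not_mem' (Set.mem_insert _ _) (by simp)

theorem ncard_pairGadget_t (i : Fin n) (p q : Fin m) :
    {S | S ∈ pairGadget i p q ∧ XCElem.t i false ∈ S}.ncard = 2 := by
  have hall : {S | S ∈ pairGadget i p q ∧ XCElem.t i false ∈ S} = pairGadget i p q := by
    refine Set.sep_eq_self_iff_mem_true.2 ?_
    rintro S (rfl | rfl) <;> simp
  rw [hall, pairGadget, Set.ncard_pair]
  exact ne_of_mem_of_not_mem' (Set.mem_insert _ _) (by simp)

theorem ncard_tripleGadget_lit {ltr : Fin m → Bool → Fin n × Bool} {i : Fin n} {b c : Bool}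
    {p q r j : Fin m} (hsame : {j | OccursIn ltr i b j} = {p, q}) (hpq : p ≠ q)
    (hopp : {j | OccursIn ltr i (!b) j} = {r}) (hocc : OccursIn ltr i c j) :
    {S | S ∈ tripleGadget i b p q r ∧ XCElem.lit i c j ∈ S}.ncard = 1 := by
  rw [Set.ncard_eq_one]
  rcases Bool.eq_or_eq_not c b with rfl | rfl
  · rcases hsame.subset hocc with rfl | rfl
    · refine ⟨{XCElem.lit i c j, XCElem.t i false}, Set.ext fun S => ⟨?_, ?_⟩⟩
      · rintro ⟨rfl | rfl | rfl, hlit⟩ <;> simp_all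
      · rintro rfl
        simp [tripleGadget]
    · refine ⟨{XCElem.lit i c j, XCElem.t i true}, Set.ext fun S => ⟨?_, ?_⟩⟩
      · rintro ⟨rfl | rfl | rfl, hlit⟩ <;> simp_all
      · rintro rfl
        simp [tripleGadget]
  · obtain rfl : j = r := hopp.subset hocc
    refine ⟨{XCElem.lit i (!b) j, XCElem.t i false, XCElem.t i true},
      Set.ext fun S => ⟨?_, ?_⟩⟩
    · rintro ⟨rfl | rfl | rfl, hlit⟩ <;> simp_all
    · rintro rfl
      simp [tripleGadget]

theorem ncard_pairGadget_lit {ltr : Fin m → Bool → Fin n × Bool} {i : Fin n} {c : Bool}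
    {p q j : Fin m} (hpos : {j | OccursIn ltr i true j} = {p})
    (hneg : {j | OccursIn ltr i false j} = {q}) (hocc : OccursIn ltr i c j) :
    {S | S ∈ pairGadget i p q ∧ XCElem.lit i c j ∈ S}.ncard = 1 := by
  have hj : j = bif c then p else q := by
    cases c
    · exact hneg.subset hocc
    · exact hpos.subset hocc
  refine Set.ncard_eq_one.2 ⟨{XCElem.lit i c j, XCElem.t i false}, Set.ext fun S => ⟨?_, ?_⟩⟩
  · rintro ⟨rfl | rfl, hlit⟩ <;> simp_all
  · rintro rfl
    cases c <;> simp_all [pairGadget]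

end Gadgets

section Incidence

variable {n m : ℕ} {ltr : Fin m → Bool → Fin n × Bool} {cls : Fin n → XCClass}
  {j₁ j₂ j₃ : Fin n → Fin m}

theorem exists_lit_or_exists_t_of_mem_variableGadget {i : Fin n} {S : Set (XCElem n m)}
    {e : XCElem n m} (hS : S ∈ variableGadget cls j₁ j₂ j₃ i) (he : e ∈ S) :
    (∃ b j, e = XCElem.lit i b j) ∨ ∃ k, e = XCElem.t i k := by
  unfold variableGadget at hS
  split at hS
  · rcases hS with rfl | rfl | rfl <;> aesop
  · rcases hS with rfl | rfl | rfl <;> aesop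
  · rcases hS with rfl | rfl <;> aesop

theorem mem_coverD_iff {S : Set (XCElem n m)} :
    S ∈ coverD ltr cls j₁ j₂ j₃ ↔
      (∃ i b j, OccursIn ltr i b j ∧ S = clauseSet i b j) ∨
        ∃ i, S ∈ variableGadget cls j₁ j₂ j₃ i := by
  have hgadget (i : Fin n) : S ∈ variableGadget cls j₁ j₂ j₃ i ↔
      (cls i = XCClass.plus ∧ S ∈ tripleGadget i true (j₁ i) (j₂ i) (j₃ i)) ∨
      (cls i = XCClass.minus ∧ S ∈ tripleGadget i false (j₁ i) (j₂ i) (j₃ i)) ∨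
      (cls i = XCClass.star ∧ S ∈ pairGadget i (j₁ i) (j₂ i)) := by
    cases hc : cls i <;> simp [variableGadget, hc]
  simp only [hgadget, exists_or, ← or_assoc]
  rfl

theorem coverD_lit_eq_insert {i : Fin n} {b : Bool} {j : Fin m} (hocc : OccursIn ltr i b j) :
    {S | S ∈ coverD ltr cls j₁ j₂ j₃ ∧ XCElem.lit i b j ∈ S} =
      insert (clauseSet i b j)
        {S | S ∈ variableGadget cls j₁ j₂ j₃ i ∧ XCElem.lit i b j ∈ S} := by
  ext S
  constructor
  · rintro ⟨hS, hlit⟩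
    rcases mem_coverD_iff.1 hS with ⟨i', b', j', -, rfl⟩ | ⟨i', hS'⟩
    · left
      simp_all [clauseSet]
    · have hi : i = i' := by
        simpa using exists_lit_or_exists_t_of_mem_variableGadget hS' hlit
      exact Or.inr ⟨hi ▸ hS', hlit⟩
  · rintro (rfl | ⟨hS, hlit⟩)
    · exact ⟨mem_coverD_iff.2 (Or.inl ⟨i, b, j, hocc, rfl⟩), Set.mem_insert _ _⟩
    · exact ⟨mem_coverD_iff.2 (Or.inr ⟨i, hS⟩), hlit⟩

theorem coverD_s_eq_pair (j : Fin m) :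
    {S | S ∈ coverD ltr cls j₁ j₂ j₃ ∧ XCElem.s j ∈ S} =
      {clauseSet (ltr j false).1 (ltr j false).2 j,
        clauseSet (ltr j true).1 (ltr j true).2 j} := by
  ext S
  constructor
  · rintro ⟨hS, hs⟩
    rcases mem_coverD_iff.1 hS with ⟨i, b, j', ⟨side, hside⟩, rfl⟩ | ⟨i, hS'⟩
    · obtain rfl : j = j' := by simpa [clauseSet] using hs
      cases side <;> simp [hside]
    · simpa using exists_lit_or_exists_t_of_mem_variableGadget hS' hs
  · rintro (rfl | rfl)
    · exact ⟨mem_coverD_iff.2 (Or.inl ⟨_, _, _, ⟨false, rfl⟩, rfl⟩), Or.inr rfl⟩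
    · exact ⟨mem_coverD_iff.2 (Or.inl ⟨_, _, _, ⟨true, rfl⟩, rfl⟩), Or.inr rfl⟩

theorem coverD_t_eq_variableGadget_t (i : Fin n) (k : Bool) :
    {S | S ∈ coverD ltr cls j₁ j₂ j₃ ∧ XCElem.t i k ∈ S} =
      {S | S ∈ variableGadget cls j₁ j₂ j₃ i ∧ XCElem.t i k ∈ S} := by
  ext S
  refine and_congr_left fun ht => ⟨fun hS => ?_, fun hS => mem_coverD_iff.2 (Or.inr ⟨i, hS⟩)⟩
  rcases mem_coverD_iff.1 hS with ⟨i', b', j', -, rfl⟩ | ⟨i', hS'⟩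
  · simp [clauseSet] at ht
  · have hi : i = i' := by
      simpa using exists_lit_or_exists_t_of_mem_variableGadget hS' ht
    exact hi ▸ hS'

theorem ncard_coverD_lit {i : Fin n} {b : Bool} {j : Fin m} (hocc : OccursIn ltr i b j)
    (hgadget : {S | S ∈ variableGadget cls j₁ j₂ j₃ i ∧ XCElem.lit i b j ∈ S}.ncard = 1) :
    {S | S ∈ coverD ltr cls j₁ j₂ j₃ ∧ XCElem.lit i b j ∈ S}.ncard = 2 := by
  have hclause : clauseSet i b j ∉
      {S | S ∈ variableGadget cls j₁ j₂ j₃ i ∧ XCElem.lit i b j ∈ S} := fun h => by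
    simpa using exists_lit_or_exists_t_of_mem_variableGadget (e := XCElem.s j) h.1 (Or.inr rfl)
  rw [coverD_lit_eq_insert hocc, Set.ncard_insert_of_notMem hclause
    (Set.finite_of_ncard_ne_zero (hgadget ▸ one_ne_zero)), hgadget]

theorem ncard_coverD_s {j : Fin m} (hne : ltr j false ≠ ltr j true) :
    {S | S ∈ coverD ltr cls j₁ j₂ j₃ ∧ XCElem.s j ∈ S}.ncard = 2 := by
  rw [coverD_s_eq_pair, Set.ncard_pair]
  refine ne_of_mem_of_not_mem' (Set.mem_insert _ _) ?_
  simpa [clauseSet, Prod.ext_iff] using hne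

theorem ncard_coverD_t {i : Fin n} {k : Bool} (hk : k = false ∨ cls i ≠ XCClass.star) :
    {S | S ∈ coverD ltr cls j₁ j₂ j₃ ∧ XCElem.t i k ∈ S}.ncard = 2 := by
  rw [coverD_t_eq_variableGadget_t]
  cases hc : cls i with
  | plus => simpa only [variableGadget, hc] using ncard_tripleGadget_t ..
  | minus => simpa only [variableGadget, hc] using ncard_tripleGadget_t ..
  | star =>
    obtain rfl : k = false := hk.resolve_right (not_not_intro hc)
    simpa only [variableGadget, hc] using ncard_pairGadget_t ..

end Incidence

theorem stmt_11 {n m : ℕ} (ltr : Fin m → Bool → Fin n × Bool)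
    (hclean : ∀ j, (ltr j false).1 ≠ (ltr j true).1)
    (cls : Fin n → XCClass) (j₁ j₂ j₃ : Fin n → Fin m)
    (hplus : ∀ i, cls i = XCClass.plus →
      {j | OccursIn ltr i true j} = {j₁ i, j₂ i} ∧ j₁ i ≠ j₂ i ∧
      {j | OccursIn ltr i false j} = {j₃ i})
    (hminus : ∀ i, cls i = XCClass.minus →
      {j | OccursIn ltr i false j} = {j₁ i, j₂ i} ∧ j₁ i ≠ j₂ i ∧
      {j | OccursIn ltr i true j} = {j₃ i})
    (hstar : ∀ i, cls i = XCClass.star →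
      {j | OccursIn ltr i true j} = {j₁ i} ∧ {j | OccursIn ltr i false j} = {j₂ i}) :
    ∀ e ∈ coverX ltr cls,
      {S | S ∈ coverD ltr cls j₁ j₂ j₃ ∧ e ∈ S}.ncard = 2 := by
  rintro e (((⟨i, b, j, hocc, rfl⟩ | ⟨j, rfl⟩) | ⟨i, rfl⟩) | ⟨i, hi, rfl⟩)
  · refine ncard_coverD_lit hocc ?_
    cases hc : cls i with
    | plus =>
      obtain ⟨hpos, hne, hneg⟩ := hplus i hc
      simpa only [variableGadget, hc] using ncard_tripleGadget_lit hpos hne hneg hocc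
    | minus =>
      obtain ⟨hneg, hne, hpos⟩ := hminus i hc
      simpa only [variableGadget, hc] using ncard_tripleGadget_lit hneg hne hpos hocc
    | star =>
      obtain ⟨hpos, hneg⟩ := hstar i hc
      simpa only [variableGadget, hc] using ncard_pairGadget_lit hpos hneg hocc
  · exact ncard_coverD_s fun h => hclean j (congrArg Prod.fst h)
  · exact ncard_coverD_t (Or.inl rfl)
  · exact ncard_coverD_t (Or.inr hi)
end

section
/- Let X be a finite set, let M be a perfect matching over X × X, and let u, v ∈ X. If u is linked to v in M, then v is linked to u in M. -/
/-- Two pairs agree if they share the first coordinate or the second coordinate. -/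
def Agrees {X : Type*} (p q : X × X) : Prop := p.1 = q.1 ∨ p.2 = q.2

/-- A matching over `X × X`: no two distinct elements agree. -/
def IsMatching {X : Type*} (M : Set (X × X)) : Prop :=
  ∀ p ∈ M, ∀ q ∈ M, p ≠ q → ¬ Agrees p q

/-- A perfect matching over `X × X`: a matching in which every element of `X` occurs as a
first coordinate and as a second coordinate. -/
def IsPerfectMatching {X : Type*} (M : Set (X × X)) : Prop :=
  IsMatching M ∧ (∀ u : X, ∃ v, (u, v) ∈ M) ∧ (∀ v : X, ∃ u, (u, v) ∈ M)

/-- `u` is linked to `v` in `M`: there exist an odd number `t ≥ 1` and elements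
`z 1, …, z t` with `(u, z 1) ∈ M`, `(z t, v) ∈ M`, and `(z i, z (i+1)) ∈ M` for
every `i ∈ [t−1]`. -/
def Linked {X : Type*} (M : Set (X × X)) (u v : X) : Prop :=
  ∃ t : ℕ, Odd t ∧ ∃ z : ℕ → X,
    (u, z 1) ∈ M ∧ (z t, v) ∈ M ∧ ∀ i, 1 ≤ i → i < t → (z i, z (i + 1)) ∈ M

/-!
A perfect matching over `X × X` is the graph of a permutation `σ` of `X`, and a chain with an odd
number of intermediate elements is a positive even number of applications of `σ`. On a finite set
every `σ ^ 2`-orbit is a cycle, so being linked is the symmetric relation of lying in one cycle of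
`σ ^ 2`.
-/

section Matching

variable {X : Type*} {M : Set (X × X)}

theorem IsMatching.snd_eq {a b c : X} (hM : IsMatching M) (hb : (a, b) ∈ M) (hc : (a, c) ∈ M) :
    b = c := by
  by_contra hbc
  exact hM _ hb _ hc (fun h ↦ hbc (congrArg Prod.snd h)) (Or.inl rfl)

theorem IsMatching.fst_eq {a b c : X} (hM : IsMatching M) (ha : (a, c) ∈ M) (hb : (b, c) ∈ M) :
    a = b := by
  by_contra hab
  exact hM _ ha _ hb (fun h ↦ hab (congrArg Prod.fst h)) (Or.inr rfl)

theorem IsPerfectMatching.exists_perm_graph_eq (hM : IsPerfectMatching M) :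
    ∃ σ : Equiv.Perm X, Function.graph σ = M := by
  obtain ⟨hmatch, hfst, hsnd⟩ := hM
  choose f hf using hfst
  choose g hg using hsnd
  let σ : Equiv.Perm X :=
    { toFun := f
      invFun := g
      left_inv := fun a ↦ hmatch.fst_eq (hg (f a)) (hf a)
      right_inv := fun b ↦ hmatch.snd_eq (hf (g b)) (hg b) }
  refine ⟨σ, Set.ext fun ⟨a, b⟩ ↦ ⟨?_, fun hab ↦ hmatch.snd_eq (hf a) hab⟩⟩
  rintro rfl
  exact hf a

end Matching

section Graph

variable {X : Type*}

theorem eq_iterate_of_forall_mem_graph {f : X → X} {u : X} {z : ℕ → X} {t : ℕ}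
    (hu : (u, z 1) ∈ Function.graph f)
    (hz : ∀ i, 1 ≤ i → i < t → (z i, z (i + 1)) ∈ Function.graph f) {i : ℕ}
    (hi : 1 ≤ i) (hit : i ≤ t) : z i = f^[i] u := by
  induction i, hi using Nat.le_induction with
  | base => exact hu.symm
  | succ n hn ih =>
    rw [Function.iterate_succ_apply', ← ih (Nat.le_of_succ_le hit)]
    exact (hz n hn hit).symm

theorem linked_graph_iff_exists_odd_iterate_succ {f : X → X} {u v : X} :
    Linked (Function.graph f) u v ↔ ∃ t, Odd t ∧ f^[t + 1] u = v := by
  refine exists_congr fun t ↦ and_congr_right fun ht ↦ ⟨?_, fun hv ↦ ?_⟩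
  · rintro ⟨z, hu, hv, hz⟩
    rw [Function.iterate_succ_apply', ← eq_iterate_of_forall_mem_graph hu hz ht.pos le_rfl]
    exact hv
  · have hstep (i : ℕ) : (f^[i] u, f^[i + 1] u) ∈ Function.graph f :=
      (Function.iterate_succ_apply' f i u).symm
    exact ⟨fun i ↦ f^[i] u, hstep 0, hv ▸ hstep t, fun i _ _ ↦ hstep i⟩

theorem linked_graph_iff_exists_pos_iterate_two_mul {f : X → X} {u v : X} :
    Linked (Function.graph f) u v ↔ ∃ k, 0 < k ∧ f^[2 * k] u = v := by
  rw [linked_graph_iff_exists_odd_iterate_succ]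
  constructor
  · rintro ⟨t, ⟨k, rfl⟩, hv⟩
    exact ⟨k + 1, k.succ_pos, hv⟩
  · rintro ⟨k, hk, hv⟩
    obtain ⟨m, rfl⟩ := Nat.exists_eq_add_one.mpr hk
    exact ⟨2 * m + 1, odd_two_mul_add_one m, hv⟩

theorem linked_graph_perm_iff_sameCycle_sq [Finite X] {σ : Equiv.Perm X} {u v : X} :
    Linked (Function.graph σ) u v ↔ (σ ^ 2).SameCycle u v := by
  simp only [linked_graph_iff_exists_pos_iterate_two_mul, Equiv.Perm.iterate_eq_pow, pow_mul]
  constructor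
  · rintro ⟨k, -, hv⟩
    exact ⟨k, hv⟩
  · intro h
    obtain ⟨k, hk, -, hv⟩ := h.exists_pow_eq''
    exact ⟨k, hk, hv⟩

end Graph

theorem stmt_13 {X : Type*} [Finite X] (M : Set (X × X))
    (hM : IsPerfectMatching M) (u v : X) (h : Linked M u v) : Linked M v u := by
  obtain ⟨σ, rfl⟩ := hM.exists_perm_graph_eq
  rw [linked_graph_perm_iff_sameCycle_sq] at h ⊢
  exact h.symm
end

section
/- Let G = (V,E) be a finite directed graph, let s, t ∈ V be distinct, assume every edge leaving s and every edge entering t has its other endpoint in V⁻ := V − {s,t}, and enumerate V⁻ = {v₁,…,vₙ} with n ≥ 1. Let X and M be as defined in the construction below. If there exists a perfect matching M' ⊆ M over X × X in which s is linked to t, then G contains a directed path from s to t. -/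
/-- The elements of the AP2DM instance built from a directed graph with source `s` and
sink `t`: `src` stands for `s`, `snk` for `t`, and `node v l` for the element `[v, l]`
(with layer `l ∈ {0, 1, 2}`). -/
inductive APElt (V : Type*) where
  | src : APElt V
  | snk : APElt V
  | node : V → Fin 3 → APElt V

/-- The universe `X = {s, t} ∪ {[v, l] : v ∈ V⁻, l ∈ {0,1,2}}`. -/
def apX {V : Type*} (s t : V) : Set (APElt V) :=
  {APElt.src, APElt.snk} ∪ {x | ∃ w l, w ≠ s ∧ w ≠ t ∧ x = APElt.node w l}

/-- The set `M = M₀ ∪ M₁ ∪ M₂ ∪ M₃ ∪ M₄ ∪ M₅ ∪ M₆ ⊆ X × X` of the construction, where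
`V⁻` is enumerated as `vmap 0, …, vmap (n-1)`. -/
def apM {V : Type*} (E : V → V → Prop) (s t : V) (n : ℕ) (hn : 0 < n)
    (vmap : Fin n → V) : Set (APElt V × APElt V) :=
  -- M₀
  {p | ∃ v w, v ≠ s ∧ v ≠ t ∧ w ≠ s ∧ w ≠ t ∧ E v w ∧
        p = (APElt.node v 0, APElt.node w 0)} ∪
  -- M₁
  {p | ∃ i j : Fin n, (j : ℕ) = (i : ℕ) + 1 ∧
        (p = (APElt.node (vmap i) 1, APElt.node (vmap j) 1) ∨
         p = (APElt.node (vmap j) 1, APElt.node (vmap i) 1))} ∪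
  -- M₂
  {p | ∃ i j : Fin n, (j : ℕ) = (i : ℕ) + 1 ∧
        (p = (APElt.node (vmap j) 2, APElt.node (vmap i) 2) ∨
         p = (APElt.node (vmap i) 2, APElt.node (vmap j) 2))} ∪
  -- M₃
  {p | ∃ w, w ≠ s ∧ w ≠ t ∧
        (p = (APElt.node w 2, APElt.node w 0) ∨ p = (APElt.node w 0, APElt.node w 1))} ∪
  -- M₄
  {(APElt.node (vmap ⟨0, hn⟩) 1, APElt.src),
   (APElt.node (vmap ⟨n - 1, by omega⟩) 1, APElt.src),
   (APElt.snk, APElt.node (vmap ⟨0, hn⟩) 2),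
   (APElt.snk, APElt.node (vmap ⟨n - 1, by omega⟩) 2)} ∪
  -- M₅
  {p | ∃ u, u ≠ s ∧ u ≠ t ∧
        ((E s u ∧ p = (APElt.src, APElt.node u 0)) ∨
         (E u t ∧ p = (APElt.node u 0, APElt.snk)))} ∪
  -- M₆
  {p | ∃ z ∈ apX s t, p = (z, z)}

/-- A matching over `X × X`: no two distinct elements agree (share a first or a second
coordinate). -/
def IsAPMatching {α : Type*} (M : Set (α × α)) : Prop :=
  ∀ p ∈ M, ∀ q ∈ M, p ≠ q → ¬(p.1 = q.1 ∨ p.2 = q.2)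

/-- A perfect matching over `X × X` for a set `X`: a matching `M ⊆ X × X` in which every
element of `X` occurs as a first coordinate and as a second coordinate. -/
def IsPerfectOn {α : Type*} (X : Set α) (M : Set (α × α)) : Prop :=
  M ⊆ X ×ˢ X ∧ IsAPMatching M ∧
    (∀ x ∈ X, ∃ y, (x, y) ∈ M) ∧ (∀ x ∈ X, ∃ y, (y, x) ∈ M)

/-- `u` is linked to `v` in `M`: there exist an odd number `t ≥ 1` and elements
`z 1, …, z t` of `X` with `(u, z 1) ∈ M`, `(z t, v) ∈ M`, and `(z i, z (i+1)) ∈ M`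
for every `i ∈ [t−1]`. -/
def LinkedIn {α : Type*} (X : Set α) (M : Set (α × α)) (u v : α) : Prop :=
  ∃ t : ℕ, Odd t ∧ ∃ z : ℕ → α, (∀ i, 1 ≤ i → i ≤ t → z i ∈ X) ∧
    (u, z 1) ∈ M ∧ (z t, v) ∈ M ∧ ∀ i, 1 ≤ i → i < t → (z i, z (i + 1)) ∈ M

/-!
Among the pairs of `M`, layer 1 leads only to layer 1 and to `s`, layer 0 and `s` never lead to
layer 2, and the only way into `t` (apart from its loop) is a pair `([u, 0], t)` with `(u, t) ∈ E`.
So until a walk from `s` in `M` first visits `t`, it stays on `s`, on layer 1, and on those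
`[v, 0]` for which `v` is reachable from `s` in `G`; the step that enters `t` then completes a path
of `G`.
-/

open Relation

theorem LinkedIn.reflTransGen {α : Type*} {X : Set α} {M : Set (α × α)} {u v : α}
    (h : LinkedIn X M u v) : ReflTransGen (fun x y => (x, y) ∈ M) u v := by
  obtain ⟨k, hk, z, -, hfirst, hlast, hstep⟩ := h
  have hmid : ReflTransGen (fun i j => (z i, z j) ∈ M) 1 k :=
    reflTransGen_of_succ_of_le _ (fun i hi => hstep i hi.1 hi.2) hk.pos
  exact ((hmid.lift z fun _ _ hij => hij).head hfirst).tail hlast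

/-- The elements that a walk from `s` in `M` may visit before it first visits `t`: the element `s`,
all of layer 1, and the `[v, 0]` with `v` reachable from `s` in the graph `E`. -/
def PreSink {V : Type*} (E : V → V → Prop) (s : V) : APElt V → Prop
  | .src => True
  | .snk => False
  | .node v 0 => ReflTransGen E s v
  | .node _ 1 => True
  | .node _ 2 => False

section

variable {V : Type*} {E : V → V → Prop} {s t : V} {n : ℕ} {hn : 0 < n} {vmap : Fin n → V}
  {x y : APElt V}

theorem PreSink.or_reflTransGen_of_mem (hx : PreSink E s x) (hxy : (x, y) ∈ apM E s t n hn vmap) :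
    PreSink E s y ∨ ReflTransGen E s t := by
  rcases hxy with (((((h₀ | h₁) | h₂) | h₃) | h₄) | h₅) | h₆
  · obtain ⟨v, w, -, -, -, -, hvw, ⟨⟩⟩ := h₀
    exact .inl (ReflTransGen.tail hx hvw)
  · obtain ⟨i, j, -, ⟨⟨⟩⟩ | ⟨⟨⟩⟩⟩ := h₁ <;> exact .inl trivial
  · obtain ⟨i, j, -, ⟨⟨⟩⟩ | ⟨⟨⟩⟩⟩ := h₂ <;> exact hx.elim
  · obtain ⟨w, -, -, ⟨⟨⟩⟩ | ⟨⟨⟩⟩⟩ := h₃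
    · exact hx.elim
    · exact .inl trivial
  · obtain ⟨⟨⟩⟩ | ⟨⟨⟩⟩ | ⟨⟨⟩⟩ | ⟨⟨⟩⟩ := h₄
    · exact .inl trivial
    · exact .inl trivial
    · exact hx.elim
    · exact hx.elim
  · obtain ⟨u, -, -, ⟨hsu, ⟨⟩⟩ | ⟨hut, ⟨⟩⟩⟩ := h₅
    · exact .inl (ReflTransGen.single hsu)
    · exact .inr (ReflTransGen.tail hx hut)
  · obtain ⟨z, -, ⟨⟩⟩ := h₆
    exact .inl hx

theorem PreSink.or_reflTransGen_of_reflTransGen (hx : PreSink E s x)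
    (hxy : ReflTransGen (fun a b => (a, b) ∈ apM E s t n hn vmap) x y) :
    PreSink E s y ∨ ReflTransGen E s t := by
  induction hxy with
  | refl => exact .inl hx
  | tail _ hyz ih => exact ih.elim (fun hy => hy.or_reflTransGen_of_mem hyz) .inr

theorem stmt_16_general
    (h : ReflTransGen (fun x y => (x, y) ∈ apM E s t n hn vmap) APElt.src APElt.snk) :
    ReflTransGen E s t :=
  have hsrc : PreSink E s APElt.src := trivial
  (hsrc.or_reflTransGen_of_reflTransGen h).resolve_left id

end

theorem stmt_16 {V : Type*} [Fintype V] (E : V → V → Prop) (s t : V) (hst : s ≠ t)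
    (hs : ∀ u, E s u → u ≠ s ∧ u ≠ t) (ht : ∀ u, E u t → u ≠ s ∧ u ≠ t)
    (n : ℕ) (hn : 0 < n) (vmap : Fin n → V) (hinj : Function.Injective vmap)
    (hrange : Set.range vmap = {x | x ≠ s ∧ x ≠ t})
    (h : ∃ M' : Set (APElt V × APElt V), M' ⊆ apM E s t n hn vmap ∧
      IsPerfectOn (apX s t) M' ∧ LinkedIn (apX s t) M' APElt.src APElt.snk) :
    Relation.ReflTransGen E s t := by
  obtain ⟨M', hM', -, hlinked⟩ := h
  exact stmt_16_general (ReflTransGen.mono (fun _ _ hxy => hM' hxy) _ _ hlinked.reflTransGen)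
end

section
/- Let G = (V,E) be a finite directed graph, let s, t ∈ V be distinct, assume every edge leaving s and every edge entering t has its other endpoint in V⁻ := V − {s,t}, and enumerate V⁻ = {v₁,…,vₙ} with n ≥ 1. Let X and M be as defined in the construction below. Suppose G contains a simple directed path (s, w₁, …, w_{k−1}, t) with k ≥ 2 whose interior vertices w₁,…,w_{k−1} all lie in V⁻ and form a proper subset of V⁻. Then there exists a perfect matching M' ⊆ M over X × X in which s is linked to t. -/
/-!
The graph of a permutation `σ` of `X` is a perfect matching over `X × X` in which every `u` is
linked to `σ ^ m u` for all even `m > 0`. It therefore suffices to find a simple cycle in `M`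
through `s` and `t` and to let `σ` rotate it, fixing everything else.

The cycle follows the given path in layer 0 from `s` to `t`, then `v₁, …, v_{i₀}` in layer 2, then
the pivot `[v_{i₀}, 0]`, which is free because `v_{i₀}` is not on the path, and finally
`v_{i₀}, …, v₁` in layer 1 back to `s`. Going from `s` to `t` with one full extra turn uses the path
twice and the return route once. As the return route visits an odd number of elements strictly
between `t` and `s`, this takes an even number of steps whatever the length of the path.
-/

section GraphMatching

variable {α : Type*} {X : Set α} {f : α → α}

theorem isPerfectOn_graphOn (hf : Set.BijOn f X X) : IsPerfectOn X (X.graphOn f) := by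
  refine ⟨?_, ?_, ?_, ?_⟩
  · rintro _ ⟨x, hx, rfl⟩
    exact ⟨hx, hf.mapsTo hx⟩
  · rintro _ ⟨x, hx, rfl⟩ _ ⟨y, hy, rfl⟩ hne (hxy | hxy)
    · exact hne (congrArg (fun z => (z, f z)) hxy)
    · exact hne (congrArg (fun z => (z, f z)) (hf.injOn hx hy hxy))
  · exact fun x hx => ⟨f x, x, hx, rfl⟩
  · intro y hy
    obtain ⟨x, hx, rfl⟩ := hf.surjOn hy
    exact ⟨x, x, hx, rfl⟩

theorem linkedIn_graphOn_iterate (hf : Set.MapsTo f X X) {u : α} (hu : u ∈ X) {m : ℕ}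
    (hm : Odd m) : LinkedIn X (X.graphOn f) u (f^[m + 1] u) := by
  have hmem (i : ℕ) : f^[i] u ∈ X := hf.iterate i hu
  have hstep (i : ℕ) : (f^[i] u, f^[i + 1] u) ∈ X.graphOn f :=
    ⟨f^[i] u, hmem i, by rw [Function.iterate_succ_apply']⟩
  exact ⟨m, hm, fun i => f^[i] u, fun i _ _ => hmem i, hstep 0, hstep m, fun i _ _ => hstep i⟩

end GraphMatching

section CycleMatching

variable {α : Type*} {X : Set α} {M : Set (α × α)}

theorem bijOn_formPerm [DecidableEq α] {l : List α} (hl : ∀ z ∈ l, z ∈ X) :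
    Set.BijOn l.formPerm X X := by
  refine l.formPerm.bijOn fun z => ?_
  by_cases hz : z ∈ l
  · exact iff_of_true (hl _ (List.formPerm_apply_mem_of_mem hz)) (hl z hz)
  · rw [List.formPerm_apply_of_notMem hz]

theorem graphOn_formPerm_subset [DecidableEq α] (hM : ∀ z ∈ X, (z, z) ∈ M) {a : α} {l : List α}
    (hnodup : (a :: l).Nodup) (hchain : (a :: (l ++ [a])).IsChain fun x y => (x, y) ∈ M) :
    X.graphOn (a :: l).formPerm ⊆ M := by
  rintro _ ⟨z, hz, rfl⟩
  by_cases hzl : z ∈ a :: l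
  · obtain ⟨i, hi, rfl⟩ := List.getElem_of_mem hzl
    have hstep := List.isChain_iff_getElem.1 hchain i (by simpa using hi)
    have hnext : (a :: l)[(i + 1) % (a :: l).length]'(Nat.mod_lt _ (by simp)) =
        (a :: (l ++ [a]))[i + 1]'(by simpa using hi) := by
      rcases (show i + 1 ≤ (a :: l).length from hi).lt_or_eq with hlt | heq
      · simp only [Nat.mod_eq_of_lt hlt]
        grind
      · simp only [heq, Nat.mod_self]
        grind
    simp only [List.formPerm_apply_getElem _ hnodup, hnext]
    grind
  · simpa only [List.formPerm_apply_of_notMem hzl] using hM z hz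

theorem exists_isPerfectOn_linkedIn_of_cycle (hM : ∀ z ∈ X, (z, z) ∈ M) {a b : α}
    {l r : List α} (hX : ∀ z ∈ a :: (l ++ b :: r), z ∈ X) (hnodup : (a :: (l ++ b :: r)).Nodup)
    (hchain : (a :: (l ++ b :: (r ++ [a]))).IsChain fun x y => (x, y) ∈ M)
    (hr : Odd r.length) : ∃ M' ⊆ M, IsPerfectOn X M' ∧ LinkedIn X M' a b := by
  classical
  set c := a :: (l ++ b :: r) with hc
  have hbij : Set.BijOn c.formPerm X X := bijOn_formPerm hX
  have hpow : (c.formPerm ^ (l.length + 1)) a = b := by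
    have hlt : l.length + 1 < l.length + (r.length + 1) + 1 := by omega
    simp [hc, List.formPerm_pow_apply_head a _ hnodup, Nat.mod_eq_of_lt hlt]
  refine ⟨X.graphOn c.formPerm, graphOn_formPerm_subset hM hnodup (by simpa using hchain),
    isPerfectOn_graphOn hbij, ?_⟩
  have hturn : (c.formPerm ^ (l.length + c.length + 1)) a = b := by
    rw [add_right_comm, pow_add, List.formPerm_pow_length_eq_one_of_nodup _ hnodup, mul_one, hpow]
  have hodd : Odd (l.length + c.length) := by
    have hlen : l.length + c.length = 2 * (l.length + 1) + r.length := by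
      simp only [hc, List.length_cons, List.length_append]
      ring
    exact hlen ▸ (even_two_mul _).add_odd hr
  rw [← hturn, ← Equiv.Perm.iterate_eq_pow]
  exact linkedIn_graphOn_iterate hbij.mapsTo (hX a (by simp [hc])) hodd

end CycleMatching

theorem isChain_cons_concat_iff {α : Type*} {R : α → α → Prop} {a b : α} {l : List α}
    (hl : l ≠ []) :
    (a :: (l ++ [b])).IsChain R ↔ R a (l.head hl) ∧ l.IsChain R ∧ R (l.getLast hl) b := by
  rw [List.isChain_cons, List.isChain_append]
  simp [List.head?_append, List.head?_eq_some_head hl, List.getLast?_eq_some_getLast hl]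

theorem isChain_ofFn_iff {α : Type*} {R : α → α → Prop} {n : ℕ} {f : Fin n → α} :
    (List.ofFn f).IsChain R ↔ ∀ i (h : i + 1 < n), R (f ⟨i, by omega⟩) (f ⟨i + 1, h⟩) := by
  simp [List.isChain_iff_getElem]

/-- `p` lists the interior vertices of a simple directed path from `s` to `t` in the digraph `E`;
the path has at least one interior vertex. -/
structure IsPathInterior {V : Type*} (E : V → V → Prop) (s t : V) (p : List V) : Prop where
  ne_nil : p ≠ []
  nodup : p.Nodup
  isChain : p.IsChain E
  source_edge : E s (p.head ne_nil)
  sink_edge : E (p.getLast ne_nil) t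
  ne_ends : ∀ u ∈ p, u ≠ s ∧ u ≠ t

theorem isPathInterior_ofFn {V : Type*} {E : V → V → Prop} {s t : V} {m : ℕ} (hm : m ≠ 0)
    {w : ℕ → V} (hsource : E s (w 1)) (hsink : E (w m) t)
    (hstep : ∀ i, 1 ≤ i → i + 1 ≤ m → E (w i) (w (i + 1)))
    (hne : ∀ i, 1 ≤ i → i ≤ m → w i ≠ s ∧ w i ≠ t)
    (hsimple : ∀ i j, 1 ≤ i → i ≤ m → 1 ≤ j → j ≤ m → w i = w j → i = j) :
    IsPathInterior E s t (List.ofFn fun i : Fin m => w (i + 1)) where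
  ne_nil := by simpa using hm
  nodup := List.nodup_ofFn.2 fun i j hij => by
    have := hsimple (i + 1) (j + 1) (by omega) (by omega) (by omega) (by omega) hij
    omega
  isChain := isChain_ofFn_iff.2 fun i hi => hstep (i + 1) (by omega) (by omega)
  source_edge := by rwa [List.head_ofFn]
  sink_edge := by
    rwa [List.getLast_ofFn, Nat.sub_add_cancel (Nat.one_le_iff_ne_zero.2 hm)]
  ne_ends := by
    rw [List.forall_mem_ofFn_iff]
    exact fun i => hne (i + 1) (by omega) (by omega)

/-- The part `v₁, …, v_{i₀}` of the enumeration `v`, up to and including the pivot `i₀`. -/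
def enumUpTo {V : Type*} {n : ℕ} (v : Fin n → V) (i₀ : Fin n) : List V :=
  List.ofFn fun j : Fin (i₀ + 1) => v (j.castLE i₀.isLt)

/-- The part of the cycle strictly between `t` and `s`: up the enumeration in layer 2, through the
pivot in layer 0, and down the enumeration in layer 1. -/
def returnRoute {V : Type*} {n : ℕ} (v : Fin n → V) (i₀ : Fin n) : List (APElt V) :=
  (enumUpTo v i₀).map (APElt.node · 2) ++
    APElt.node (v i₀) 0 :: (enumUpTo v i₀).reverse.map (APElt.node · 1)

section EnumUpTo

variable {V : Type*} {n : ℕ} {v : Fin n → V} {i₀ : Fin n}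

theorem enumUpTo_ne_nil : enumUpTo v i₀ ≠ [] := by
  simp [enumUpTo]

theorem head_enumUpTo : (enumUpTo v i₀).head enumUpTo_ne_nil = v ⟨0, i₀.pos⟩ :=
  List.head_ofFn _

theorem getLast_enumUpTo : (enumUpTo v i₀).getLast enumUpTo_ne_nil = v i₀ :=
  List.getLast_ofFn _

theorem nodup_enumUpTo (hv : Function.Injective v) : (enumUpTo v i₀).Nodup :=
  List.nodup_ofFn.2 (hv.comp (Fin.castLE_injective _))

theorem mem_range_of_mem_enumUpTo {u : V} (hu : u ∈ enumUpTo v i₀) : u ∈ Set.range v := by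
  obtain ⟨j, rfl⟩ := List.mem_ofFn.1 hu
  exact ⟨_, rfl⟩

theorem isChain_enumUpTo {R : V → V → Prop}
    (hR : ∀ i j : Fin n, (j : ℕ) = i + 1 → R (v i) (v j)) : (enumUpTo v i₀).IsChain R :=
  isChain_ofFn_iff.2 fun _ _ => hR _ _ rfl

theorem odd_length_returnRoute : Odd (returnRoute v i₀).length := by
  simp only [returnRoute, List.length_append, List.length_map, List.length_cons,
    List.length_reverse]
  grind

end EnumUpTo

section Construction

variable {V : Type*} {E : V → V → Prop} {s t : V} {n : ℕ} {v : Fin n → V} {i₀ : Fin n}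
  {p : List V}

theorem edge_mem_apM {u w : V} (hu : u ≠ s ∧ u ≠ t) (hw : w ≠ s ∧ w ≠ t) (huw : E u w)
    (hn : 0 < n) : (APElt.node u 0, APElt.node w 0) ∈ apM E s t n hn v := by
  simp [apM, hu, hw, huw]

theorem layerTwo_succ_mem_apM {i j : Fin n} (hij : (j : ℕ) = i + 1) (hn : 0 < n) :
    (APElt.node (v i) 2, APElt.node (v j) 2) ∈ apM E s t n hn v := by
  simp only [apM, Set.mem_union, Set.mem_ofPred_eq]
  grind

theorem layerOne_pred_mem_apM {i j : Fin n} (hij : (j : ℕ) = i + 1) (hn : 0 < n) :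
    (APElt.node (v j) 1, APElt.node (v i) 1) ∈ apM E s t n hn v := by
  simp only [apM, Set.mem_union, Set.mem_ofPred_eq]
  grind

theorem isChain_layerZero (hp : IsPathInterior E s t p) (hn : 0 < n) :
    (APElt.src :: (p.map (APElt.node · 0) ++ [APElt.snk])).IsChain
      fun x y => (x, y) ∈ apM E s t n hn v := by
  rw [isChain_cons_concat_iff (by simpa using hp.ne_nil), List.isChain_map, List.head_map,
    List.getLast_map]
  refine ⟨?_, ?_, ?_⟩
  · have hhead := hp.ne_ends _ (List.head_mem hp.ne_nil)
    simp [apM, hhead, hp.source_edge]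
  · exact hp.isChain.imp_of_mem_imp fun u w hu hw huw =>
      edge_mem_apM (hp.ne_ends u hu) (hp.ne_ends w hw) huw hn
  · have hlast := hp.ne_ends _ (List.getLast_mem hp.ne_nil)
    simp [apM, hlast, hp.sink_edge]

theorem isChain_layerTwo (hi₀ : v i₀ ≠ s ∧ v i₀ ≠ t) :
    (APElt.snk :: ((enumUpTo v i₀).map (APElt.node · 2) ++ [APElt.node (v i₀) 0])).IsChain
      fun x y => (x, y) ∈ apM E s t n i₀.pos v := by
  rw [isChain_cons_concat_iff (by simpa using enumUpTo_ne_nil), List.isChain_map, List.head_map,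
    List.getLast_map, head_enumUpTo, getLast_enumUpTo]
  exact ⟨by simp [apM], isChain_enumUpTo fun i j hij => layerTwo_succ_mem_apM hij i₀.pos,
    by simp [apM, hi₀]⟩

theorem isChain_layerOne (hi₀ : v i₀ ≠ s ∧ v i₀ ≠ t) :
    (APElt.node (v i₀) 0 :: ((enumUpTo v i₀).reverse.map (APElt.node · 1) ++
      [APElt.src])).IsChain fun x y => (x, y) ∈ apM E s t n i₀.pos v := by
  rw [isChain_cons_concat_iff (by simpa using enumUpTo_ne_nil), List.isChain_map, List.head_map,
    List.getLast_map, List.head_reverse, List.getLast_reverse, List.isChain_reverse,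
    head_enumUpTo, getLast_enumUpTo]
  exact ⟨by simp [apM, hi₀], isChain_enumUpTo fun i j hij => layerOne_pred_mem_apM hij i₀.pos,
    by simp [apM]⟩

theorem isChain_returnRoute (hi₀ : v i₀ ≠ s ∧ v i₀ ≠ t) :
    (APElt.snk :: (returnRoute v i₀ ++ [APElt.src])).IsChain
      fun x y => (x, y) ∈ apM E s t n i₀.pos v := by
  rw [returnRoute, List.append_assoc, List.cons_append, ← List.cons_append, List.isChain_split]
  exact ⟨isChain_layerTwo hi₀, isChain_layerOne hi₀⟩

theorem node_injective (l : Fin 3) : Function.Injective fun u : V => APElt.node u l :=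
  fun _ _ h => (APElt.node.inj h).1

theorem nodup_returnRoute (hv : Function.Injective v) : (returnRoute v i₀).Nodup := by
  have hlayer (l : Fin 3) : ((enumUpTo v i₀).map (APElt.node · l)).Nodup :=
    (nodup_enumUpTo hv).map (node_injective l)
  simp [returnRoute, List.nodup_append, hlayer]

theorem disjoint_layerZero_returnRoute (hi₀ : v i₀ ∉ p) :
    (p.map (APElt.node · 0)).Disjoint (returnRoute v i₀) := by
  have hpivot : ∀ u ∈ p, u ≠ v i₀ := fun u hu h => hi₀ (h ▸ hu)
  simpa [returnRoute, List.disjoint_left] using hpivot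

theorem nodup_cycle (hp : p.Nodup) (hv : Function.Injective v) (hi₀ : v i₀ ∉ p) :
    (APElt.src :: (p.map (APElt.node · 0) ++ APElt.snk :: returnRoute v i₀)).Nodup := by
  have hends : APElt.src ∉ returnRoute v i₀ ∧ APElt.snk ∉ returnRoute v i₀ := by
    simp [returnRoute]
  simp [List.nodup_append', hp.map (node_injective 0), nodup_returnRoute hv, hends,
    disjoint_layerZero_returnRoute hi₀]

theorem cycle_subset_apX (hp : ∀ u ∈ p, u ≠ s ∧ u ≠ t) (hv : ∀ i, v i ≠ s ∧ v i ≠ t) :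
    ∀ z ∈ APElt.src :: (p.map (APElt.node · 0) ++ APElt.snk :: returnRoute v i₀),
      z ∈ apX s t := by
  have hnode {u : V} (hu : u ≠ s ∧ u ≠ t) (l : Fin 3) : APElt.node u l ∈ apX s t :=
    Or.inr ⟨u, l, hu.1, hu.2, rfl⟩
  have henum {u : V} (hu : u ∈ enumUpTo v i₀) : u ≠ s ∧ u ≠ t := by
    obtain ⟨i, rfl⟩ := mem_range_of_mem_enumUpTo hu
    exact hv i
  have hends : APElt.src ∈ apX s t ∧ APElt.snk ∈ apX s t := by simp [apX]
  simp only [returnRoute, List.mem_cons, List.mem_append, List.mem_map, List.mem_reverse]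
  grind

theorem exists_isPerfectOn_linkedIn_of_isPathInterior (hp : IsPathInterior E s t p)
    (hinj : Function.Injective v) (hv : ∀ i, v i ≠ s ∧ v i ≠ t) (hi₀ : v i₀ ∉ p) :
    ∃ M' ⊆ apM E s t n i₀.pos v,
      IsPerfectOn (apX s t) M' ∧ LinkedIn (apX s t) M' APElt.src APElt.snk := by
  refine exists_isPerfectOn_linkedIn_of_cycle (fun z hz => Or.inr ⟨z, hz, rfl⟩)
    (cycle_subset_apX hp.ne_ends hv) (nodup_cycle hp.nodup hinj hi₀) ?_ odd_length_returnRoute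
  rw [← List.cons_append, List.isChain_split]
  exact ⟨isChain_layerZero hp i₀.pos, isChain_returnRoute (hv i₀)⟩

end Construction

theorem stmt_17_general {V : Type*} (E : V → V → Prop) (s t : V)
    (n : ℕ) (hn : 0 < n) (vmap : Fin n → V) (hinj : Function.Injective vmap)
    (hrange : Set.range vmap = {x | x ≠ s ∧ x ≠ t})
    (k : ℕ) (hk : 2 ≤ k) (w : ℕ → V)
    (hw₁ : E s (w 1)) (hwₖ : E (w (k - 1)) t)
    (hmid : ∀ i, 1 ≤ i → i + 1 ≤ k - 1 → E (w i) (w (i + 1)))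
    (hwV : ∀ i, 1 ≤ i → i ≤ k - 1 → w i ≠ s ∧ w i ≠ t)
    (hsimple : ∀ i j, 1 ≤ i → i ≤ k - 1 → 1 ≤ j → j ≤ k - 1 → w i = w j → i = j)
    (hproper : ∃ x, x ≠ s ∧ x ≠ t ∧ ∀ i, 1 ≤ i → i ≤ k - 1 → w i ≠ x) :
    ∃ M' : Set (APElt V × APElt V), M' ⊆ apM E s t n hn vmap ∧
      IsPerfectOn (apX s t) M' ∧ LinkedIn (apX s t) M' APElt.src APElt.snk := by
  have hpath := isPathInterior_ofFn (by omega) hw₁ hwₖ hmid hwV hsimple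
  have hV (i : Fin n) : vmap i ≠ s ∧ vmap i ≠ t := hrange.subset ⟨i, rfl⟩
  obtain ⟨x, hxs, hxt, hx⟩ := hproper
  obtain ⟨i₀, rfl⟩ := hrange.superset ⟨hxs, hxt⟩
  refine exists_isPerfectOn_linkedIn_of_isPathInterior hpath hinj hV (i₀ := i₀) fun hmem => ?_
  obtain ⟨i, hi⟩ := List.mem_ofFn.1 hmem
  exact hx (i + 1) (by omega) (by omega) hi

theorem stmt_17 {V : Type*} [Fintype V] (E : V → V → Prop) (s t : V) (hst : s ≠ t)
    (hs : ∀ u, E s u → u ≠ s ∧ u ≠ t) (ht : ∀ u, E u t → u ≠ s ∧ u ≠ t)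
    (n : ℕ) (hn : 0 < n) (vmap : Fin n → V) (hinj : Function.Injective vmap)
    (hrange : Set.range vmap = {x | x ≠ s ∧ x ≠ t})
    -- a simple directed path (s, w 1, …, w (k−1), t) whose interior vertices lie in V⁻
    (k : ℕ) (hk : 2 ≤ k) (w : ℕ → V)
    (hw₁ : E s (w 1)) (hwₖ : E (w (k - 1)) t)
    (hmid : ∀ i, 1 ≤ i → i + 1 ≤ k - 1 → E (w i) (w (i + 1)))
    (hwV : ∀ i, 1 ≤ i → i ≤ k - 1 → w i ≠ s ∧ w i ≠ t)
    (hsimple : ∀ i j, 1 ≤ i → i ≤ k - 1 → 1 ≤ j → j ≤ k - 1 → w i = w j → i = j)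
    -- the interior vertices form a proper subset of V⁻
    (hproper : ∃ x, x ≠ s ∧ x ≠ t ∧ ∀ i, 1 ≤ i → i ≤ k - 1 → w i ≠ x) :
    ∃ M' : Set (APElt V × APElt V), M' ⊆ apM E s t n hn vmap ∧
      IsPerfectOn (apX s t) M' ∧ LinkedIn (apX s t) M' APElt.src APElt.snk :=
  stmt_17_general E s t n hn vmap hinj hrange k hk w hw₁ hwₖ hmid hwV hsimple hproper
end

section
/- Let G = (V,E) be a finite directed graph in which every vertex has at most 2 incoming edges and at most 2 outgoing edges, let s, t ∈ V be distinct, assume every edge leaving s and every edge entering t has its other endpoint in V⁻ := V − {s,t}, and enumerate V⁻ = {v₁,…,vₙ} with n ≥ 1. Let X and M be as defined in the construction below. Then for every z ∈ X, the number of elements w ∈ X with (z,w) ∈ M is at most 4, and the number of elements w ∈ X with (w,z) ∈ M is at most 4. -/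
/-!
The construction is symmetric: reversing all edges of the graph, exchanging `s` with `t` and layer
`1` with layer `2` turns `M` into its converse. Hence it suffices to count the pairs with a given
first coordinate. For `[v, 0]` these are the two pairs ending in `[v, 0]` and `[v, 1]` and one pair
for each edge leaving `v`, where an edge into `t` contributes `t` itself. For `[v, 1]` and `[v, 2]`
they are two pairs in addition to those coming from the neighbours of `v` on the path
`v₁, …, vₙ`, of which there are at most two. Besides `(s, s)` and `(t, t)`, the pairs starting with
`s` come from the edges leaving `s`, those starting with `t` from the two ends of the path.
-/

open APElt SimpleGraph

section Counting

variable {α β : Type*}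

theorem encard_pair_le_two (a b : α) : ({a, b} : Set α).encard ≤ 2 :=
  (Set.encard_insert_le {b} a).trans_eq (by rw [Set.encard_singleton, one_add_one_eq_two])

theorem encard_le_add_of_subset_union_image {S A : Set β} {T : Set α} {f : α → β}
    (h : S ⊆ A ∪ f '' T) : S.encard ≤ T.encard + A.encard :=
  calc S.encard ≤ (A ∪ f '' T).encard := Set.encard_le_encard h
    _ ≤ A.encard + (f '' T).encard := Set.encard_union_le _ _
    _ ≤ A.encard + T.encard := by gcongr; exact Set.encard_image_le f T
    _ = T.encard + A.encard := add_comm _ _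

theorem encard_neighborSet_hasse_le_two [LinearOrder α] (a : α) :
    ((hasse α).neighborSet a).encard ≤ 2 := by
  have upper : {b | a ⋖ b}.encard ≤ 1 :=
    Set.encard_le_one_iff.mpr fun _ _ hb hc ↦ CovBy.unique_right hb hc
  have lower : {b | b ⋖ a}.encard ≤ 1 :=
    Set.encard_le_one_iff.mpr fun _ _ hb hc ↦ CovBy.unique_left hb hc
  calc ((hasse α).neighborSet a).encard
      ≤ {b | a ⋖ b}.encard + {b | b ⋖ a}.encard := Set.encard_union_le _ _
    _ ≤ 1 + 1 := add_le_add upper lower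
    _ = 2 := one_add_one_eq_two

theorem encard_neighborSet_map_le {G : SimpleGraph α} {d : ℕ∞}
    (hG : ∀ a, (G.neighborSet a).encard ≤ d) (f : α ↪ β) (b : β) :
    ((G.map f).neighborSet b).encard ≤ d := by
  by_cases hb : b ∈ Set.range f
  · obtain ⟨a, rfl⟩ := hb
    rw [neighborSet_map]
    exact (Set.encard_image_le f _).trans (hG a)
  · have isolated : (G.map f).neighborSet b = ∅ :=
      Set.eq_empty_of_forall_notMem fun _ ⟨_, a, _, _, ha, _⟩ ↦ hb ⟨a, ha⟩
    simp [isolated]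

end Counting

namespace APElt

variable {V : Type*}

/-- The involution of the elements that exchanges `s` with `t` and `[v, 1]` with `[v, 2]` and fixes
every `[v, 0]`. It carries the construction to the one for the reversed graph. -/
def mirror : APElt V → APElt V
  | src => snk
  | snk => src
  | node v 0 => node v 0
  | node v 1 => node v 2
  | node v 2 => node v 1

theorem mirror_involutive : Function.Involutive (mirror : APElt V → APElt V)
  | src => rfl
  | snk => rfl
  | node _ 0 => rfl
  | node _ 1 => rfl
  | node _ 2 => rfl

end APElt

/-- The relation on elements behind `apM`, for an edge relation `E`, a graph `P` in place of the
path `v₁, …, vₙ` and vertices `a`, `b` in place of its ends. Of the membership conditions in `V⁻` it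
retains only those needed for counting, so it contains the relation given by `apM`. -/
inductive APArc {V : Type*} (E : V → V → Prop) (P : SimpleGraph V) (s t a b : V) :
    APElt V → APElt V → Prop
  | edge {v w : V} (hv : v ≠ s) (hw : w ≠ t) (hvw : E v w) :
      APArc E P s t a b (node v 0) (node w 0)
  | path_one {v w : V} (hvw : P.Adj v w) : APArc E P s t a b (node v 1) (node w 1)
  | path_two {v w : V} (hvw : P.Adj v w) : APArc E P s t a b (node v 2) (node w 2)
  | two_zero (v : V) : APArc E P s t a b (node v 2) (node v 0)
  | zero_one (v : V) : APArc E P s t a b (node v 0) (node v 1)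
  | end_src {v : V} (hv : v ∈ ({a, b} : Set V)) : APArc E P s t a b (node v 1) src
  | snk_end {v : V} (hv : v ∈ ({a, b} : Set V)) : APArc E P s t a b snk (node v 2)
  | src_edge {v : V} (hv : E s v) : APArc E P s t a b src (node v 0)
  | edge_snk {v : V} (hv : E v t) : APArc E P s t a b (node v 0) snk
  | refl (z : APElt V) : APArc E P s t a b z z

namespace APArc

variable {V : Type*} {E : V → V → Prop} {P : SimpleGraph V} {s t a b : V}

theorem mirror {z w : APElt V} :
    APArc E P s t a b z w → APArc (flip E) P t s a b w.mirror z.mirror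
  | edge hv hw hvw => edge hw hv hvw
  | path_one hvw => path_two hvw.symm
  | path_two hvw => path_one hvw.symm
  | two_zero v => zero_one v
  | zero_one v => two_zero v
  | end_src hv => snk_end hv
  | snk_end hv => end_src hv
  | src_edge hv => edge_snk hv
  | edge_snk hv => src_edge hv
  | refl z => refl z.mirror

theorem setOf_src_subset :
    {w | APArc E P s t a b src w} ⊆ {src} ∪ (node · 0) '' {u | E s u}
  | _, src_edge hv => .inr ⟨_, hv, rfl⟩
  | _, refl _ => .inl rfl

theorem setOf_snk_subset :
    {w | APArc E P s t a b snk w} ⊆ {snk} ∪ (node · 2) '' {a, b}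
  | _, snk_end hv => .inr ⟨_, hv, rfl⟩
  | _, refl _ => .inl rfl

open Classical in
theorem setOf_node_zero_subset (v : V) :
    {w | APArc E P s t a b (node v 0) w} ⊆
      {node v 0, node v 1} ∪ (fun u ↦ if u = t then snk else node u 0) '' {u | E v u}
  | _, edge _ hw hvw => .inr ⟨_, hvw, if_neg hw⟩
  | _, zero_one _ => .inl (.inr rfl)
  | _, edge_snk hv => .inr ⟨t, hv, if_pos rfl⟩
  | _, refl _ => .inl (.inl rfl)

theorem setOf_node_one_subset (v : V) :
    {w | APArc E P s t a b (node v 1) w} ⊆ {node v 1, src} ∪ (node · 1) '' P.neighborSet v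
  | _, path_one hvw => .inr ⟨_, hvw, rfl⟩
  | _, end_src _ => .inl (.inr rfl)
  | _, refl _ => .inl (.inl rfl)

theorem setOf_node_two_subset (v : V) :
    {w | APArc E P s t a b (node v 2) w} ⊆ {node v 2, node v 0} ∪ (node · 2) '' P.neighborSet v
  | _, path_two hvw => .inr ⟨_, hvw, rfl⟩
  | _, two_zero _ => .inl (.inr rfl)
  | _, refl _ => .inl (.inl rfl)

theorem encard_setOf_left_le {d : ℕ∞} (hE : ∀ v, {u | E v u}.encard ≤ d)
    (hP : ∀ v, (P.neighborSet v).encard ≤ 2) (z : APElt V) :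
    {w | APArc E P s t a b z w}.encard ≤ max d 2 + 2 := by
  have edges (v : V) : {u | E v u}.encard ≤ max d 2 := le_max_of_le_left (hE v)
  have path (v : V) : (P.neighborSet v).encard ≤ max d 2 := le_max_of_le_right (hP v)
  have ends : ({a, b} : Set V).encard ≤ max d 2 := le_max_of_le_right (encard_pair_le_two a b)
  have singleton_le (x : APElt V) : ({x} : Set (APElt V)).encard ≤ 2 := by simp
  match z with
  | src =>
    exact (encard_le_add_of_subset_union_image setOf_src_subset).trans
      (add_le_add (edges s) (singleton_le src))
  | snk =>
    exact (encard_le_add_of_subset_union_image setOf_snk_subset).trans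
      (add_le_add ends (singleton_le snk))
  | node v 0 =>
    exact (encard_le_add_of_subset_union_image (setOf_node_zero_subset v)).trans
      (add_le_add (edges v) (encard_pair_le_two _ _))
  | node v 1 =>
    exact (encard_le_add_of_subset_union_image (setOf_node_one_subset v)).trans
      (add_le_add (path v) (encard_pair_le_two _ _))
  | node v 2 =>
    exact (encard_le_add_of_subset_union_image (setOf_node_two_subset v)).trans
      (add_le_add (path v) (encard_pair_le_two _ _))

theorem encard_setOf_right_le {d : ℕ∞} (hE : ∀ v, {u | E u v}.encard ≤ d)
    (hP : ∀ v, (P.neighborSet v).encard ≤ 2) (z : APElt V) :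
    {w | APArc E P s t a b w z}.encard ≤ max d 2 + 2 :=
  calc {w | APArc E P s t a b w z}.encard
      ≤ {w | APArc (flip E) P t s a b z.mirror w}.encard :=
        Set.encard_le_encard_of_injOn (fun _ ↦ mirror) mirror_involutive.injective.injOn
    _ ≤ max d 2 + 2 := encard_setOf_left_le hE hP z.mirror

end APArc

theorem apArc_of_mem_apM {V : Type*} {E : V → V → Prop} {s t : V} {n : ℕ} {hn : 0 < n}
    {vmap : Fin n ↪ V} {z w : APElt V} (h : (z, w) ∈ apM E s t n hn vmap) :
    APArc E ((pathGraph n).map vmap) s t (vmap ⟨0, hn⟩) (vmap ⟨n - 1, by omega⟩) z w := by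
  have adj {i j : Fin n} (hij : (j : ℕ) = i + 1) :
      ((pathGraph n).map vmap).Adj (vmap i) (vmap j) :=
    map_adj_apply.mpr (pathGraph_adj.mpr (.inl hij.symm))
  rcases h with
    (((((⟨v, u, hvs, -, -, hut, hvu, h⟩ | ⟨i, j, hij, h | h⟩) | ⟨i, j, hij, h | h⟩) |
      ⟨v, -, -, h | h⟩) | h | h | h | h) | ⟨u, -, -, ⟨hu, h⟩ | ⟨hu, h⟩⟩) | ⟨x, -, h⟩ <;>
    obtain ⟨rfl, rfl⟩ := Prod.mk.inj h
  · exact .edge hvs hut hvu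
  · exact .path_one (adj hij)
  · exact .path_one (adj hij).symm
  · exact .path_two (adj hij).symm
  · exact .path_two (adj hij)
  · exact .two_zero v
  · exact .zero_one v
  · exact .end_src (.inl rfl)
  · exact .end_src (.inr rfl)
  · exact .snk_end (.inl rfl)
  · exact .snk_end (.inr rfl)
  · exact .src_edge hu
  · exact .edge_snk hu
  · exact .refl _

theorem finite_of_range_eq_ne_and_ne {ι V : Type*} [Finite ι] {f : ι → V} {s t : V}
    (hf : Set.range f = {x | x ≠ s ∧ x ≠ t}) : Finite V := by
  have cover : Set.range f ∪ {s, t} = Set.univ := by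
    rw [hf]
    ext x
    simp only [Set.mem_union, Set.mem_ofPred_eq, Set.mem_insert_iff, Set.mem_singleton_iff,
      Set.mem_univ]
    tauto
  exact Set.finite_univ_iff.mp (cover ▸ (Set.finite_range f).union (Set.toFinite {s, t}))

theorem stmt_18_general {V : Type*} (E : V → V → Prop) (d : ℕ)
    (hout : ∀ v : V, {u | E v u}.ncard ≤ d) (hin : ∀ v : V, {u | E u v}.ncard ≤ d)
    (s t : V) (n : ℕ) (hn : 0 < n) (vmap : Fin n → V) (hinj : Function.Injective vmap)
    (hrange : Set.range vmap = {x | x ≠ s ∧ x ≠ t}) (z : APElt V) :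
    {w | (z, w) ∈ apM E s t n hn vmap}.ncard ≤ max d 2 + 2 ∧
      {w | (w, z) ∈ apM E s t n hn vmap}.ncard ≤ max d 2 + 2 := by
  have : Finite V := finite_of_range_eq_ne_and_ne hrange
  have encard_le {T : Set V} (hT : T.ncard ≤ d) : T.encard ≤ d :=
    Set.encard_le_coe_iff_finite_ncard_le.mpr ⟨T.toFinite, hT⟩
  have ncard_le {S S' : Set (APElt V)} (hS : S ⊆ S') (hS' : S'.encard ≤ max (d : ℕ∞) 2 + 2) :
      S.ncard ≤ max d 2 + 2 :=
    (Set.encard_le_coe_iff_finite_ncard_le.mp (mod_cast (Set.encard_le_encard hS).trans hS')).2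
  let path : Fin n ↪ V := ⟨vmap, hinj⟩
  have hpath : ∀ v, (((pathGraph n).map path).neighborSet v).encard ≤ 2 :=
    encard_neighborSet_map_le encard_neighborSet_hasse_le_two path
  exact ⟨ncard_le (fun _ ↦ apArc_of_mem_apM (vmap := path))
      (APArc.encard_setOf_left_le (fun v ↦ encard_le (hout v)) hpath z),
    ncard_le (fun _ ↦ apArc_of_mem_apM (vmap := path))
      (APArc.encard_setOf_right_le (fun v ↦ encard_le (hin v)) hpath z)⟩

theorem stmt_18 {V : Type*} [Fintype V] (E : V → V → Prop)
    (hout : ∀ v : V, {u | E v u}.ncard ≤ 2) (hin : ∀ v : V, {u | E u v}.ncard ≤ 2)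
    (s t : V) (hst : s ≠ t)
    (hs : ∀ u, E s u → u ≠ s ∧ u ≠ t) (ht : ∀ u, E u t → u ≠ s ∧ u ≠ t)
    (n : ℕ) (hn : 0 < n) (vmap : Fin n → V) (hinj : Function.Injective vmap)
    (hrange : Set.range vmap = {x | x ≠ s ∧ x ≠ t}) :
    ∀ z ∈ apX s t,
      {w | (z, w) ∈ apM E s t n hn vmap}.ncard ≤ 4 ∧
      {w | (w, z) ∈ apM E s t n hn vmap}.ncard ≤ 4 := by
  exact fun z _ ↦ stmt_18_general E 2 hout hin s t n hn vmap hinj hrange z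
end
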